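/- Suppose the GMLS approximation with polynomial space P_m (polynomials of degree ≤ m in R^d) reproduces polynomials exactly: Σ_j a_j(λ) p(x_j) = λ(p) for all p ∈ P_m. If u is (m+1)-times continuously differentiable, λ(u) = D^β u(z) for a multi-index |β| = k ≤ m and all x_j lie in a ball of radius h around z, and the coefficients satisfy Σ_j |a_j(λ)| ≤ C h^{−k}, then |λ(u) − Σ_j a_j(λ) u(x_j)| ≤ C' h^{m+1−k}, with C' depending on C, m, d and the (m+1)-st derivatives of u near z. -/

import Mathlib

theorem iteratedFDeriv_adj_swap {E : Type*} [NormedAddCommGroup E] [NormedSpace ℝ E]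
    (u : E → ℝ) (n : ℕ) (hu : ContDiff ℝ (n + 1) u) (i : Fin n) (z : E) (v : Fin (n + 1) → E) :
    iteratedFDeriv ℝ (n + 1) u z (v ∘ Equiv.swap i.castSucc i.succ)
      = iteratedFDeriv ℝ (n + 1) u z v := by
  induction n generalizing z with
  | zero => exact i.elim0
  | succ n ih =>
    have hu1 : ContDiff ℝ (n + 1) u := hu.of_le (by
      exact_mod_cast Nat.le_succ (n + 1))
    have hd1 : Differentiable ℝ (iteratedFDeriv ℝ (n + 1) u) :=
      hu.differentiable_iteratedFDeriv (by exact_mod_cast Nat.lt_succ_self (n + 1))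
    have hd0 : Differentiable ℝ (iteratedFDeriv ℝ n u) :=
      hu1.differentiable_iteratedFDeriv (by exact_mod_cast Nat.lt_succ_self n)
    refine Fin.cases ?_ (fun j => ?_) i
    · have hc : ContDiff ℝ 2 (iteratedFDeriv ℝ n u) :=
        hu.iteratedFDeriv_right (by push_cast; rw [add_comm, add_assoc]; norm_num)
      have key : ∀ w : Fin (n + 2) → E, iteratedFDeriv ℝ (n + 1 + 1) u z w =
          fderiv ℝ (fderiv ℝ (iteratedFDeriv ℝ n u)) z (w 0) (w 1) (Fin.tail (Fin.tail w)) := by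
        intro w
        have hfd : DifferentiableAt ℝ (fderiv ℝ (iteratedFDeriv ℝ n u)) z :=
          ((hc.fderiv_right (m := 1) (by norm_num)).differentiable (by norm_num)) z
        rw [(hd1 z).iteratedFDeriv_succ_apply_left']
        have : (fun y => iteratedFDeriv ℝ (n + 1) u y (Fin.tail w)) =
            fun y => (ContinuousMultilinearMap.apply ℝ (fun _ : Fin n => E) ℝ (Fin.tail (Fin.tail w)))
              (fderiv ℝ (iteratedFDeriv ℝ n u) y (w 1)) := by
          ext y
          rw [iteratedFDeriv_succ_apply_left]
          rfl
        rw [this]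
        have h2 := (((ContinuousMultilinearMap.apply ℝ (fun _ : Fin n => E) ℝ
          (Fin.tail (Fin.tail w))).hasFDerivAt).comp z
            (hfd.hasFDerivAt.clm_apply (hasFDerivAt_const (w 1) z))).fderiv
        simp only [Function.comp_def] at h2
        rw [h2]
        simp
      have hs := hc.contDiffAt (x := z) |>.isSymmSndFDerivAt (by simp)
      rw [key, key]
      have e0 : (v ∘ Equiv.swap (Fin.castSucc (0 : Fin (n + 1))) (Fin.succ 0)) 0 = v 1 := by
        simp
      have e1 : (v ∘ Equiv.swap (Fin.castSucc (0 : Fin (n + 1))) (Fin.succ 0)) 1 = v 0 := by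
        simp
      have e2 : Fin.tail (Fin.tail (v ∘ Equiv.swap (Fin.castSucc (0 : Fin (n + 1))) (Fin.succ 0)))
          = Fin.tail (Fin.tail v) := by
        ext l
        simp only [Fin.tail, Function.comp]
        rw [Equiv.swap_apply_of_ne_of_ne]
        · simp [Fin.ext_iff]
        · simp [Fin.ext_iff]
      rw [e0, e1, e2, hs.eq]
    · rw [(hd1 z).iteratedFDeriv_succ_apply_left', (hd1 z).iteratedFDeriv_succ_apply_left']
      have e0 : (v ∘ Equiv.swap (Fin.castSucc j.succ) (Fin.succ j.succ)) 0 = v 0 := by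
        simp only [Function.comp]
        rw [Equiv.swap_apply_of_ne_of_ne]
        · simp [Fin.ext_iff]
        · simp [Fin.ext_iff]
      have e1 : Fin.tail (v ∘ Equiv.swap (Fin.castSucc j.succ) (Fin.succ j.succ))
          = Fin.tail v ∘ Equiv.swap j.castSucc j.succ := by
        ext l
        simp only [Fin.tail, Function.comp]
        congr 1
        rw [← Fin.succ_castSucc]
        exact ((Fin.succ_injective (n + 1)).map_swap j.castSucc j.succ l).symm
      rw [e0, e1]
      congr 2
      ext y
      exact ih hu1 j y (Fin.tail v)

theorem iteratedFDeriv_perm {E : Type*} [NormedAddCommGroup E] [NormedSpace ℝ E]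
    (u : E → ℝ) (n : ℕ) (hu : ContDiff ℝ n u) (z : E) (v : Fin n → E) (σ : Equiv.Perm (Fin n)) :
    iteratedFDeriv ℝ n u z (fun i => v (σ i)) = iteratedFDeriv ℝ n u z v := by
  cases n with
  | zero => congr 1; ext i; exact i.elim0
  | succ n =>
    have hσ : σ ∈ Submonoid.closure
        (Set.range fun i : Fin n ↦ Equiv.swap i.castSucc i.succ) := by
      rw [Equiv.Perm.mclosure_swap_castSucc_succ]; trivial
    induction hσ using Submonoid.closure_induction generalizing v with
    | mem x hx =>
      obtain ⟨i, rfl⟩ := hx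
      exact iteratedFDeriv_adj_swap u n (by exact_mod_cast hu) i z v
    | one => rfl
    | mul x y hx hy ihx ihy =>
      rw [← ihx v, ← ihy (fun i => v (x i))]
      rfl

/-- The polynomial representing `y ↦ f (y - z, ..., y - z)`. -/
theorem exists_poly_multilinear (d n : ℕ)
    (f : ContinuousMultilinearMap ℝ (fun _ : Fin n => EuclideanSpace ℝ (Fin d)) ℝ)
    (z : EuclideanSpace ℝ (Fin d)) :
    ∃ p : MvPolynomial (Fin d) ℝ, p.totalDegree ≤ n ∧
      ∀ y : EuclideanSpace ℝ (Fin d),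
        MvPolynomial.eval (fun i => y i) p = f (fun _ => y - z) := by
  classical
  refine ⟨∑ r : Fin n → Fin d, MvPolynomial.C (f fun i => EuclideanSpace.single (r i) (1 : ℝ)) *
    ∏ i, (MvPolynomial.X (r i) - MvPolynomial.C (z (r i))), ?_, ?_⟩
  · apply MvPolynomial.totalDegree_finsetSum_le
    intro r _
    refine (MvPolynomial.totalDegree_mul _ _).trans ?_
    rw [MvPolynomial.totalDegree_C, zero_add]
    refine (MvPolynomial.totalDegree_finsetProd _ _).trans ?_
    calc _ ≤ ∑ i : Fin n, 1 := Finset.sum_le_sum fun i _ => by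
          refine (MvPolynomial.totalDegree_sub _ _).trans ?_
          simp
      _ = n := by simp
  · intro y
    have hy : y - z = ∑ i, (y i - z i) • EuclideanSpace.single i (1 : ℝ) := by
      ext j
      simp [Finset.sum_apply, Pi.single_apply]
    rw [hy]
    have := f.toMultilinearMap.map_sum
      (fun (_ : Fin n) (i : Fin d) => (y i - z i) • EuclideanSpace.single i (1 : ℝ))
    simp only [ContinuousMultilinearMap.coe_coe] at this
    rw [this]
    simp only [map_sum, map_mul, map_prod, map_sub, MvPolynomial.eval_C, MvPolynomial.eval_X]
    refine Finset.sum_congr rfl fun r _ => ?_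
    rw [f.map_smul_univ (fun i => y (r i) - z (r i)), smul_eq_mul, mul_comm]

/-- Taylor polynomial: existence with derivatives at `z` and remainder bound. -/
theorem exists_taylor_poly (d m : ℕ) (u : EuclideanSpace ℝ (Fin d) → ℝ)
    (hu : ContDiff ℝ (m + 1) u) (z : EuclideanSpace ℝ (Fin d)) :
    ∃ p : MvPolynomial (Fin d) ℝ, p.totalDegree ≤ m ∧
      (∀ k ≤ m, ∀ v : Fin k → EuclideanSpace ℝ (Fin d),
        iteratedFDeriv ℝ k (fun y : EuclideanSpace ℝ (Fin d) =>
          MvPolynomial.eval (fun i => y i) p) z v = iteratedFDeriv ℝ k u z v) ∧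
      ∀ h M : ℝ, (∀ y ∈ Metric.closedBall z h, ‖iteratedFDeriv ℝ (m + 1) u y‖ ≤ M) →
        ∀ x ∈ Metric.closedBall z h,
          |u x - MvPolynomial.eval (fun i => x i) p| ≤ M * h ^ (m + 1) := by
  choose q hq1 hq2 using fun n : ℕ => exists_poly_multilinear d n
    ((n.factorial : ℝ)⁻¹ • iteratedFDeriv ℝ n u z) z
  have hev : ∀ y : EuclideanSpace ℝ (Fin d),
      MvPolynomial.eval (fun i => y i) (∑ n ∈ Finset.range (m + 1), q n) =
      ∑ n ∈ Finset.range (m + 1),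
        (n.factorial : ℝ)⁻¹ • iteratedFDeriv ℝ n u z (fun _ => y - z) := by
    intro y
    rw [map_sum]
    exact Finset.sum_congr rfl fun n _ => hq2 n y
  refine ⟨∑ n ∈ Finset.range (m + 1), q n, ?_, ?_, ?_⟩
  · apply MvPolynomial.totalDegree_finsetSum_le
    intro n hn
    exact (hq1 n).trans (Nat.lt_succ_iff.mp (Finset.mem_range.mp hn))
  · intro k hk v
    let P : FormalMultilinearSeries ℝ (EuclideanSpace ℝ (Fin d)) ℝ := fun n =>
      if n < m + 1 then (n.factorial : ℝ)⁻¹ • iteratedFDeriv ℝ n u z else 0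
    have hP : HasFiniteFPowerSeriesOnBall (fun y : EuclideanSpace ℝ (Fin d) =>
          MvPolynomial.eval (fun i => y i) (∑ n ∈ Finset.range (m + 1), q n)) P z (m + 1) ⊤ := by
      apply HasFiniteFPowerSeriesOnBall.mk'
      · intro n hn
        simp only [P]
        rw [if_neg (by omega)]
      · simp
      · intro y _
        rw [hev]
        refine Finset.sum_congr rfl fun n hn => ?_
        simp only [P]
        rw [if_pos (Finset.mem_range.mp hn)]
        simp
    rw [hP.toHasFPowerSeriesOnBall.iteratedFDeriv_eq_sum_of_completeSpace]
    have huk : ContDiff ℝ k u := hu.of_le (by exact_mod_cast (by omega : k ≤ m + 1))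
    have : ∀ σ : Equiv.Perm (Fin k), P k (fun i => v (σ i)) =
        (k.factorial : ℝ)⁻¹ * iteratedFDeriv ℝ k u z v := by
      intro σ
      simp only [P]
      rw [if_pos (by omega), ContinuousMultilinearMap.smul_apply,
        iteratedFDeriv_perm u k huk z v σ, smul_eq_mul]
    rw [Finset.sum_congr rfl fun σ _ => this σ, Finset.sum_const, Finset.card_univ,
      Fintype.card_perm, Fintype.card_fin, nsmul_eq_mul, ← mul_assoc,
      mul_inv_cancel₀ (by exact_mod_cast k.factorial_ne_zero), one_mul]
  · intro h M hM x hx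
    have hxz : ‖x - z‖ ≤ h := by simpa [dist_eq_norm] using hx
    have hh : 0 ≤ h := (norm_nonneg _).trans hxz
    have hM0 : 0 ≤ M := (norm_nonneg _).trans (hM x hx)
    have ht := map_add_eq_sum_add_integral_iteratedFDeriv (f := u) (x := z) (y := x - z) (n := m)
      (fun t _ => hu.contDiffAt)
    rw [add_sub_cancel] at ht
    rw [hev, ht, add_sub_cancel_left, smul_eq_mul, abs_mul]
    have hI : ‖∫ t in (0 : ℝ)..1, (1 - t) ^ m •
        iteratedFDeriv ℝ (m + 1) u (z + t • (x - z)) (fun _ => x - z)‖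
          ≤ M * h ^ (m + 1) * |(1 : ℝ) - 0| := by
      apply intervalIntegral.norm_integral_le_of_norm_le_const
      intro t ht
      rw [Set.uIoc_of_le zero_le_one] at ht
      have hmem : z + t • (x - z) ∈ Metric.closedBall z h := by
        rw [mem_closedBall_iff_norm, add_sub_cancel_left, norm_smul, Real.norm_eq_abs,
          abs_of_pos ht.1]
        exact (mul_le_of_le_one_left (norm_nonneg _) ht.2).trans hxz
      have h1 : ‖(1 - t) ^ m‖ ≤ 1 := by
        rw [norm_pow, Real.norm_eq_abs, abs_of_nonneg (by linarith [ht.2])]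
        exact pow_le_one₀ (by linarith [ht.2]) (by linarith [ht.1])
      rw [norm_smul]
      refine (mul_le_of_le_one_left (norm_nonneg _) h1).trans ?_
      refine (ContinuousMultilinearMap.le_opNorm _ _).trans ?_
      rw [Finset.prod_const, Finset.card_univ, Fintype.card_fin]
      exact mul_le_mul (hM _ hmem) (pow_le_pow_left₀ (norm_nonneg _) hxz _) (by positivity) hM0
    rw [Real.norm_eq_abs, sub_zero, abs_one, mul_one] at hI
    refine (mul_le_of_le_one_left (abs_nonneg _) ?_).trans hI
    rw [abs_of_nonneg (by positivity)]
    exact inv_le_one_of_one_le₀ (by exact_mod_cast m.factorial_pos)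


/-- GMLS error bound. If the GMLS approximation reproduces all
polynomials of degree `≤ m` for the functional `λ(u) = D^β u(z)` (`|β| = k ≤ m`,
encoded by the direction list `ι : Fin k → Fin d`), the nodes lie in the ball
`B(z,h)` and `∑ |a_j| ≤ C/h^k`, then for `u ∈ C^{m+1}` with `(m+1)`-st
derivatives bounded by `M` near `z`,
`|λ(u) − ∑ a_j u(x_j)| ≤ c·C·M·h^{m+1−k}` with `c` depending only on `m, d, k`. -/
theorem stmt_18 (d m k : ℕ) (hk : k ≤ m) :
    ∃ c : ℝ, 0 < c ∧
      ∀ (h : ℝ), 0 < h →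
      ∀ (z : EuclideanSpace ℝ (Fin d)) (N : ℕ)
        (x : Fin N → EuclideanSpace ℝ (Fin d)),
        (∀ j, x j ∈ Metric.closedBall z h) →
      ∀ (aco : Fin N → ℝ) (C : ℝ), (∑ j, |aco j|) ≤ C / h ^ k →
      ∀ (u : EuclideanSpace ℝ (Fin d) → ℝ), ContDiff ℝ (m + 1) u →
      ∀ (ι : Fin k → Fin d),
        (∀ p : MvPolynomial (Fin d) ℝ, p.totalDegree ≤ m →
          (iteratedFDeriv ℝ k
              (fun y : EuclideanSpace ℝ (Fin d) =>
                MvPolynomial.eval (fun i => y i) p) z)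
              (fun i => EuclideanSpace.single (ι i) (1 : ℝ))
            = ∑ j, aco j * MvPolynomial.eval (fun i => x j i) p) →
      ∀ M : ℝ, (∀ y ∈ Metric.closedBall z h, ‖iteratedFDeriv ℝ (m + 1) u y‖ ≤ M) →
        |(iteratedFDeriv ℝ k u z) (fun i => EuclideanSpace.single (ι i) (1 : ℝ))
            - ∑ j, aco j * u (x j)|
          ≤ c * C * M * h ^ (m + 1 - k) := by
  refine ⟨1, one_pos, ?_⟩
  intro h hh z N x hx aco C hC u hu ι hrep M hM
  obtain ⟨p, hp1, hp2, hp3⟩ := exists_taylor_poly d m u hu z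
  have hM0 : 0 ≤ M := (norm_nonneg _).trans (hM z (Metric.mem_closedBall_self hh.le))
  rw [← hp2 k hk, hrep p hp1, ← Finset.sum_sub_distrib]
  calc _ ≤ ∑ j, |aco j * MvPolynomial.eval (fun i => x j i) p - aco j * u (x j)| :=
        Finset.abs_sum_le_sum_abs _ _
    _ ≤ ∑ j, |aco j| * (M * h ^ (m + 1)) := Finset.sum_le_sum fun j _ => by
        rw [← mul_sub, abs_mul, abs_sub_comm]
        exact mul_le_mul_of_nonneg_left (hp3 h M hM _ (hx j)) (abs_nonneg _)
    _ = (∑ j, |aco j|) * (M * h ^ (m + 1)) := by rw [Finset.sum_mul]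
    _ ≤ C / h ^ k * (M * h ^ (m + 1)) := mul_le_mul_of_nonneg_right hC (by positivity)
    _ = 1 * C * M * h ^ (m + 1 - k) := by
        have : h ^ (m + 1) = h ^ (m + 1 - k) * h ^ k := by
          rw [← pow_add]; congr 1; omega
        rw [this]
        field_simp
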